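/- Let S be an inverse semigroup with zero. The map σ : E(S) → Set Ω given by σ(e) = Ω_e is a tight representation of the semilattice E(S) in the Boolean algebra of all subsets of Ω: it satisfies σ(0) = ∅, σ(e*f) = σ(e) ∩ σ(f), and for all finite subsets X, Y ⊆ E(S) and every finite cover Z of E(S)^{X,Y}, (⋂_{x∈X} σ x) ∩ (⋂_{y∈Y} (σ y)ᶜ) ⊆ ⋃_{z∈Z} σ z. -/

import Mathlib

/-- An inverse semigroup with zero: every element `s` has a unique generalized
inverse `star s`, and `0` is absorbing. -/
class InverseSemigroupWithZero (S : Type*) extends Semigroup S, Zero S, Star S where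
  zero_mul : ∀ s : S, 0 * s = 0
  mul_zero : ∀ s : S, s * 0 = 0
  mul_star_mul_self : ∀ s : S, s * star s * s = s
  star_mul_self_star : ∀ s : S, star s * s * star s = star s
  star_unique : ∀ s x : S, s * x * s = s → x * s * x = x → x = star s

variable {S : Type*} [InverseSemigroupWithZero S]

/-- The natural partial order on an inverse semigroup: `s ≤ t` iff `t * s⋆ * s = s`. -/
def natLe (s t : S) : Prop := t * star s * s = s

/-- A filter in the inverse semigroup `S` (w.r.t. the natural partial order). -/
def IsFilterS (ξ : Set S) : Prop :=
  ξ.Nonempty ∧ (0 : S) ∉ ξ ∧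
    (∀ x ∈ ξ, ∀ y : S, natLe x y → y ∈ ξ) ∧
    ∀ x ∈ ξ, ∀ y ∈ ξ, ∃ z ∈ ξ, natLe z x ∧ natLe z y

/-- An ultrafilter: a filter maximal under inclusion. -/
def IsUltraS (ξ : Set S) : Prop :=
  IsFilterS ξ ∧ ∀ η : Set S, IsFilterS η → ξ ⊆ η → η = ξ

/-- The set `Ω` of all ultrafilters in `S`. -/
def OmegaAll (S : Type*) [InverseSemigroupWithZero S] : Set (Set S) := {ξ | IsUltraS ξ}

/-- `Ω_e`: the set of ultrafilters `ξ` with `eξ ⊆ ξ`. -/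
def OmegaE (e : S) : Set (Set S) := {ξ | IsUltraS ξ ∧ ∀ t ∈ ξ, e * t ∈ ξ}

/-- The map `λₛ` on filters. -/
def lambdaMap (s : S) (ξ : Set S) : Set S := {u | ∃ t ∈ ξ, natLe (s * t) u}

/-- `y` is dense in `x` (for idempotents `y ≤ x`): there is no nonzero idempotent
`z ≤ x` with `z * y = 0`. -/
def DenseIn (y x : S) : Prop :=
  ∀ z : S, IsIdempotentElem z → z * x = z → z * y = 0 → z = 0

/-- `s` essentially coincides with `t`. -/
def EssEq (s t : S) : Prop :=
  star s * s = star t * t ∧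
    ∀ f : S, IsIdempotentElem f → f ≠ 0 → f * (star s * s) = f →
      ∃ e : S, IsIdempotentElem e ∧ e ≠ 0 ∧ e * f = e ∧ s * e = t * e

/-- The set `E(S)^{X,Y}` of idempotents below every member of `X` and disjoint
from every member of `Y`. -/
def eSXY (X Y : Finset S) : Set S :=
  {z | IsIdempotentElem z ∧ (∀ x ∈ X, z * x = z) ∧ ∀ y ∈ Y, z * y = 0}

/-- `Z` is a cover for `F ⊆ E(S)`. -/
def IsCoverS (Z F : Set S) : Prop :=
  Z ⊆ F ∧ ∀ x ∈ F, x ≠ 0 → ∃ z ∈ Z, z * x ≠ 0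

namespace RegRep

open InverseSemigroupWithZero

variable {T : Type*} [InverseSemigroupWithZero T]

theorem idem_mul {e f : T} (he : IsIdempotentElem e) (hf : IsIdempotentElem f) :
    IsIdempotentElem (e * f) := by
  have he2 : e * e = e := he
  have hf2 : f * f = f := hf
  have he' : ∀ a, e * (e * a) = e * a := fun a => by rw [← mul_assoc, he2]
  have hf' : ∀ a, f * (f * a) = f * a := fun a => by rw [← mul_assoc, hf2]
  have h1 := mul_star_mul_self (e * f)
  have h2 := star_mul_self_star (e * f)
  have hu := star_unique (e * f) (f * star (e * f) * e)
  generalize hx : star (e * f) = x at *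
  have h2' : ∀ a, x * (e * (f * (x * a))) = x * a := fun a => by
    have := congrArg (· * a) h2
    simpa only [mul_assoc] using this
  simp only [mul_assoc] at h1 h2 hu
  have hxx : f * (x * e) = x := by
    apply hu
    · simp only [he', hf']; exact h1
    · simp only [he', hf', h2']
  have hid : x * x = x := by
    calc x * x = (f * (x * e)) * (f * (x * e)) := by rw [hxx]
      _ = f * (x * e) := by simp only [mul_assoc, h2']
      _ = x := hxx
  have e1 : x = star x := star_unique x x (by rw [hid, hid]) (by rw [hid, hid])
  have e2 : e * f = star x := star_unique x (e * f) (by simpa only [mul_assoc] using h2)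
    (by simpa only [mul_assoc] using h1)
  have e3 : e * f = x := e2.trans e1.symm
  rw [e3]; exact hid

theorem idem_comm {e f : T} (he : IsIdempotentElem e) (hf : IsIdempotentElem f) :
    e * f = f * e := by
  have he2 : e * e = e := he
  have hf2 : f * f = f := hf
  have he' : ∀ a, e * (e * a) = e * a := fun a => by rw [← mul_assoc, he2]
  have hf' : ∀ a, f * (f * a) = f * a := fun a => by rw [← mul_assoc, hf2]
  have h1 : (e * f) * (e * f) = e * f := idem_mul he hf
  have h2 : (f * e) * (f * e) = f * e := idem_mul hf he
  have a1 : e * f = star (e * f) := star_unique _ _ (by rw [h1, h1]) (by rw [h1, h1])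
  have a2 : f * e = star (e * f) := star_unique _ _
    (by simp only [mul_assoc, he', hf'] at h1 ⊢; exact h1)
    (by simp only [mul_assoc, he', hf'] at h2 ⊢; exact h2)
  exact a1.trans a2.symm

theorem idem_r (t : T) : IsIdempotentElem (t * star t) := by
  change t * star t * (t * star t) = _
  rw [← mul_assoc, mul_star_mul_self]

theorem idem_l (t : T) : IsIdempotentElem (star t * t) := by
  change star t * t * (star t * t) = _
  rw [← mul_assoc, star_mul_self_star]

theorem star_mul_idem (t : T) {k : T} (hk : IsIdempotentElem k) :
    star (t * k) = k * star t := by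
  have hk2 : k * k = k := hk
  have hk' : ∀ a, k * (k * a) = k * a := fun a => by rw [← mul_assoc, hk2]
  have c := idem_comm hk (idem_l t)
  symm
  apply star_unique
  · calc t * k * (k * star t) * (t * k) = t * (k * k * (star t * t)) * k := by
          simp only [mul_assoc]
      _ = (t * star t * t) * (k * k) := by rw [hk2, c]; simp only [mul_assoc, hk2]
      _ = t * k := by rw [hk2, mul_star_mul_self]
  · calc k * star t * (t * k) * (k * star t) = k * ((star t * t) * (k * k)) * star t := by
          simp only [mul_assoc]
      _ = (k * k) * (star t * t * star t) := by rw [hk2, ← c]; simp only [mul_assoc, hk']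
      _ = k * star t := by rw [hk2, star_mul_self_star]

theorem le_mul_idem (t : T) {k : T} (hk : IsIdempotentElem k) : natLe (t * k) t := by
  have hk2 : k * k = k := hk
  unfold natLe
  rw [star_mul_idem t hk]
  calc t * (k * star t) * (t * k) = t * (k * (star t * t)) * k := by simp only [mul_assoc]
    _ = (t * star t * t) * (k * k) := by rw [idem_comm hk (idem_l t)]; simp only [mul_assoc]
    _ = t * k := by rw [hk2, mul_star_mul_self]

theorem le_iff {s t : T} : natLe s t ↔ ∃ k, IsIdempotentElem k ∧ s = t * k := by
  constructor
  · intro h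
    exact ⟨star s * s, idem_l s, by rw [← mul_assoc]; exact h.symm⟩
  · rintro ⟨k, hk, rfl⟩
    exact le_mul_idem t hk

theorem idem_conj (t : T) {e : T} (he : IsIdempotentElem e) :
    IsIdempotentElem (star t * e * t) := by
  have he2 : e * e = e := he
  change star t * e * t * (star t * e * t) = _
  calc star t * e * t * (star t * e * t) = star t * (e * (t * star t)) * e * t := by
        simp only [mul_assoc]
    _ = (star t * t * star t) * (e * e) * t := by
        rw [idem_comm he (idem_r t)]; simp only [mul_assoc]
    _ = _ := by rw [he2, star_mul_self_star]

theorem idem_mul_le (t : T) {e : T} (he : IsIdempotentElem e) : natLe (e * t) t := by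
  refine le_iff.2 ⟨_, idem_conj t he, ?_⟩
  calc e * t = e * (t * star t * t) := by rw [mul_star_mul_self]
    _ = e * (t * star t) * t := by simp only [mul_assoc]
    _ = _ := by rw [idem_comm he (idem_r t)]; simp only [mul_assoc]

theorem le_trans' {s t u : T} (h1 : natLe s t) (h2 : natLe t u) : natLe s u := by
  obtain ⟨k, hk, rfl⟩ := le_iff.1 h1
  obtain ⟨l, hl, rfl⟩ := le_iff.1 h2
  rw [mul_assoc]
  exact le_mul_idem u (idem_mul hl hk)

theorem le_mul_left (e : T) {s t : T} (h : natLe s t) : natLe (e * s) (e * t) := by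
  obtain ⟨k, hk, rfl⟩ := le_iff.1 h
  rw [← mul_assoc]
  exact le_mul_idem _ hk

theorem le_refl' (t : T) : natLe t t := mul_star_mul_self t

theorem mem_omegaE_of {ξ : Set T} (hξ : IsUltraS ξ) {e : T} (he : IsIdempotentElem e)
    (h : ∀ t ∈ ξ, e * t ≠ 0) : ξ ∈ OmegaE e := by
  refine ⟨hξ, ?_⟩
  have hsub : ξ ⊆ {u | ∃ t ∈ ξ, natLe (e * t) u} := fun t ht => ⟨t, ht, idem_mul_le t he⟩
  have hF : IsFilterS {u | ∃ t ∈ ξ, natLe (e * t) u} := by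
    refine ⟨hξ.1.1.mono hsub, ?_, ?_, ?_⟩
    · rintro ⟨t, ht, h0⟩
      obtain ⟨k, -, hk⟩ := le_iff.1 h0
      exact h t ht (hk.trans (zero_mul k))
    · rintro x ⟨t, ht, hx⟩ y hy
      exact ⟨t, ht, le_trans' hx hy⟩
    · rintro x ⟨t, ht, hx⟩ y ⟨u, hu, hy⟩
      obtain ⟨z, hz, h1, h2⟩ := hξ.1.2.2.2 t ht u hu
      exact ⟨e * z, ⟨z, hz, le_refl' _⟩, le_trans' (le_mul_left e h1) hx,
        le_trans' (le_mul_left e h2) hy⟩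
  have := hξ.2 _ hF hsub
  intro t ht
  rw [← this]
  exact ⟨t, ht, le_refl' _⟩

theorem exists_common {ξ : Set T} (hξ : IsFilterS ξ) (P : T → T → Prop)
    (hP : ∀ a s t, natLe s t → P a t → P a s) (A : Finset T)
    (h : ∀ a ∈ A, ∃ t ∈ ξ, P a t) : ∃ t ∈ ξ, ∀ a ∈ A, P a t := by
  classical
  induction A using Finset.induction_on with
  | empty =>
    obtain ⟨t, ht⟩ := hξ.1
    exact ⟨t, ht, by simp⟩
  | insert a A _ ih =>
    obtain ⟨t, ht, h1⟩ := ih fun b hb => h b (Finset.mem_insert_of_mem hb)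
    obtain ⟨u, hu, h2⟩ := h a (Finset.mem_insert_self _ _)
    obtain ⟨z, hz, hzt, hzu⟩ := hξ.2.2.2 t ht u hu
    refine ⟨z, hz, fun b hb => ?_⟩
    rcases Finset.mem_insert.1 hb with rfl | hb
    · exact hP _ _ _ hzu h2
    · exact hP _ _ _ hzt (h1 b hb)

theorem zero_down (a s t : T) (h : natLe s t) (h0 : a * t = 0) : a * s = 0 := by
  obtain ⟨k, -, rfl⟩ := le_iff.1 h
  rw [← mul_assoc, h0, InverseSemigroupWithZero.zero_mul]

theorem fix_down (a s t : T) (h : natLe s t) (h0 : a * t = t) : a * s = s := by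
  obtain ⟨k, -, rfl⟩ := le_iff.1 h
  rw [← mul_assoc, h0]

end RegRep

theorem regular_representation_tight (S : Type*) [InverseSemigroupWithZero S] :
    OmegaE (0 : S) = ∅ ∧
      (∀ e f : S, IsIdempotentElem e → IsIdempotentElem f →
        OmegaE (e * f) = OmegaE e ∩ OmegaE f) ∧
      ∀ X Y Z : Finset S, (∀ x ∈ X, IsIdempotentElem x) → (∀ y ∈ Y, IsIdempotentElem y) →
        IsCoverS (↑Z) (eSXY X Y) →
        (OmegaAll S ∩ (⋂ x ∈ X, OmegaE x)) ∩ (⋂ y ∈ Y, OmegaAll S \ OmegaE y) ⊆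
          ⋃ z ∈ Z, OmegaE z := by
  classical
  refine ⟨?_, ?_, ?_⟩
  · ext ξ
    simp only [Set.mem_empty_iff_false, iff_false]
    rintro ⟨hξ, h⟩
    obtain ⟨t, ht⟩ := hξ.1.1
    apply hξ.1.2.1
    have := h t ht
    rwa [InverseSemigroupWithZero.zero_mul] at this
  · intro e f he hf
    ext ξ
    constructor
    · rintro ⟨hξ, h⟩
      refine ⟨⟨hξ, fun t ht => ?_⟩, ⟨hξ, fun t ht => ?_⟩⟩
      · refine hξ.1.2.2.1 _ (h t ht) _ ?_
        rw [mul_assoc]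
        exact RegRep.le_mul_left e (RegRep.idem_mul_le t hf)
      · refine hξ.1.2.2.1 _ (h t ht) _ ?_
        rw [mul_assoc]
        exact RegRep.idem_mul_le _ he
    · rintro ⟨⟨hξ, h1⟩, ⟨-, h2⟩⟩
      refine ⟨hξ, fun t ht => ?_⟩
      rw [mul_assoc]
      exact h1 _ (h2 t ht)
  · rintro X Y Z hX hY ⟨hZ, hcov⟩ ξ ⟨⟨hξ, hx⟩, hy⟩
    have hξ : IsUltraS ξ := hξ
    simp only [Set.mem_iInter] at hx hy
    by_contra hcon
    simp only [Set.mem_iUnion, not_exists] at hcon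
    have key : ∀ a : S, IsIdempotentElem a → ξ ∉ OmegaE a → ∃ t ∈ ξ, a * t = 0 := by
      intro a ha hn
      by_contra hne
      push Not at hne
      exact hn (RegRep.mem_omegaE_of hξ ha hne)
    obtain ⟨t1, ht1, h1⟩ := RegRep.exists_common hξ.1 (fun a t => a * t = t)
      RegRep.fix_down X (by
        intro a ha
        obtain ⟨t, ht⟩ := hξ.1.1
        refine ⟨a * t, (hx a ha).2 t ht, ?_⟩
        change a * (a * t) = a * t
        rw [← mul_assoc, (hX a ha).eq])
    obtain ⟨t2, ht2, h2⟩ := RegRep.exists_common hξ.1 (fun a t => a * t = 0)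
      RegRep.zero_down Y (fun a ha => key a (hY a ha) (hy a ha).2)
    obtain ⟨t3, ht3, h3⟩ := RegRep.exists_common hξ.1 (fun a t => a * t = 0)
      RegRep.zero_down Z (fun a ha => key a (hZ ha).1 (hcon a ha))
    obtain ⟨u, hu, hu1, hu2⟩ := hξ.1.2.2.2 t1 ht1 t2 ht2
    obtain ⟨t, ht, htu, ht3'⟩ := hξ.1.2.2.2 u hu t3 ht3
    have hp := RegRep.idem_r t
    have hmem : t * star t ∈ eSXY X Y := by
      refine ⟨hp, ?_, ?_⟩
      · intro x hxX
        rw [RegRep.idem_comm hp (hX x hxX), ← mul_assoc,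
          RegRep.fix_down x t t1 (RegRep.le_trans' htu hu1) (h1 x hxX)]
      · intro y hyY
        rw [RegRep.idem_comm hp (hY y hyY), ← mul_assoc,
          RegRep.zero_down y t t2 (RegRep.le_trans' htu hu2) (h2 y hyY),
          InverseSemigroupWithZero.zero_mul]
    have hne : t * star t ≠ 0 := by
      intro h0
      apply hξ.1.2.1
      have := InverseSemigroupWithZero.mul_star_mul_self t
      rw [h0, InverseSemigroupWithZero.zero_mul] at this
      rwa [this]
    obtain ⟨z, hz, hzp⟩ := hcov _ hmem hne
    apply hzp
    rw [← mul_assoc, RegRep.zero_down z t t3 ht3' (h3 z hz),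
      InverseSemigroupWithZero.zero_mul]
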